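/- Let σ = Σ_j p_j · α_j ⊗ β_j be a separable positive semidefinite matrix on ℂ^{d} ⊗ ℂ^{d'} (a finite sum with p_j ≥ 0, α_j density matrices on ℂ^{d}, β_j density matrices on ℂ^{d'}). Then σ ≤ I_d ⊗ σ₂ in the Loewner order, where σ₂ = Tr₁(σ) is the partial trace of σ over the first tensor factor. -/

import Mathlib

/-!
For a positive semidefinite `A` every eigenvalue is at most the sum of all of them, so
`A ≤ tr A • 1`. Tensoring with a positive semidefinite `B` preserves this order, and
`Tr₁ (A ⊗ B) = tr A • B`; thus `A ⊗ B ≤ (tr A • 1) ⊗ B = 1 ⊗ Tr₁ (A ⊗ B)`. Both sides are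
additive in the product terms of a separable matrix.
-/

open Matrix BigOperators ComplexOrder Kronecker

noncomputable section

/-- Partial trace over the first tensor factor. -/
def ptraceA {d d' : ℕ} (σ : Matrix (Fin d × Fin d') (Fin d × Fin d') ℂ) :
    Matrix (Fin d') (Fin d') ℂ :=
  Matrix.of fun i j => ∑ a : Fin d, σ (a, i) (a, j)

section

open scoped MatrixOrder

variable {m n J R 𝕜 : Type*} [RCLike 𝕜]

/-- The partial trace `Tr₁` over the first factor of a matrix indexed by a product, as a linear
map. On complex matrices indexed by `Fin d × Fin d'` its underlying function is `ptraceA`. -/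
def partialTraceFst [Fintype m] [Semiring R] : Matrix (m × n) (m × n) R →ₗ[R] Matrix n n R where
  toFun σ := of fun i j => ∑ a, σ (a, i) (a, j)
  map_add' σ τ := by ext i j; simp [Finset.sum_add_distrib]
  map_smul' c σ := by ext i j; simp [Finset.mul_sum]

theorem partialTraceFst_kronecker [Fintype m] [Semiring R] (A : Matrix m m R) (B : Matrix n n R) :
    partialTraceFst (A ⊗ₖ B) = A.trace • B := by
  ext i j
  exact (Finset.sum_mul _ (fun a => A a a) (B i j)).symm

theorem le_trace_smul_one_of_posSemidef [Fintype m] [DecidableEq m] {A : Matrix m m 𝕜}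
    (hA : A.PosSemidef) : A ≤ A.trace • (1 : Matrix m m 𝕜) := by
  let eig := hA.isHermitian.eigenvalues
  have eig_le_sum (i : m) : eig i ≤ ∑ k, eig k :=
    Finset.single_le_sum (fun k _ => hA.eigenvalues_nonneg k) (Finset.mem_univ i)
  have le_sum : A ≤ algebraMap ℝ (Matrix m m 𝕜) (∑ k, eig k) := by
    refine le_algebraMap_of_spectrum_le (fun x hx => ?_) hA.isHermitian
    rw [hA.isHermitian.spectrum_real_eq_range_eigenvalues] at hx
    obtain ⟨i, rfl⟩ := hx
    exact eig_le_sum i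
  have trace_eq : A.trace = ((∑ k, eig k : ℝ) : 𝕜) := by
    rw [hA.isHermitian.trace_eq_sum_eigenvalues, RCLike.ofReal_sum]
  rwa [Algebra.algebraMap_eq_smul_one, RCLike.real_smul_eq_coe_smul (K := 𝕜), ← trace_eq] at le_sum

theorem kronecker_le_kronecker_right [Finite m] [Finite n] {A₁ A₂ : Matrix m m 𝕜}
    {B : Matrix n n 𝕜} (hA : A₁ ≤ A₂) (hB : B.PosSemidef) : A₁ ⊗ₖ B ≤ A₂ ⊗ₖ B := by
  have sub_kronecker : A₂ ⊗ₖ B - A₁ ⊗ₖ B = (A₂ - A₁) ⊗ₖ B :=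
    ((kroneckerBilinear (R := 𝕜)).map_sub₂ A₂ A₁ B).symm
  rw [le_iff, sub_kronecker]
  exact (le_iff.mp hA).kronecker hB

theorem kronecker_le_one_kronecker_partialTraceFst [Fintype m] [DecidableEq m] [Finite n]
    {A : Matrix m m 𝕜} {B : Matrix n n 𝕜} (hA : A.PosSemidef) (hB : B.PosSemidef) :
    A ⊗ₖ B ≤ (1 : Matrix m m 𝕜) ⊗ₖ partialTraceFst (A ⊗ₖ B) :=
  calc
    A ⊗ₖ B ≤ (A.trace • (1 : Matrix m m 𝕜)) ⊗ₖ B :=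
      kronecker_le_kronecker_right (le_trace_smul_one_of_posSemidef hA) hB
    _ = (1 : Matrix m m 𝕜) ⊗ₖ partialTraceFst (A ⊗ₖ B) := by
      rw [partialTraceFst_kronecker, smul_kronecker, kronecker_smul]

theorem separable_le_id_tensor_marginal_general [Fintype m] [DecidableEq m] [Finite n] [Fintype J]
    {A : J → Matrix m m 𝕜} {B : J → Matrix n n 𝕜}
    (hA : ∀ j, (A j).PosSemidef) (hB : ∀ j, (B j).PosSemidef) :
    ∑ j, A j ⊗ₖ B j ≤ (1 : Matrix m m 𝕜) ⊗ₖ partialTraceFst (∑ j, A j ⊗ₖ B j) :=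
  calc
    ∑ j, A j ⊗ₖ B j ≤ ∑ j, (1 : Matrix m m 𝕜) ⊗ₖ partialTraceFst (A j ⊗ₖ B j) :=
      Finset.sum_le_sum fun j _ => kronecker_le_one_kronecker_partialTraceFst (hA j) (hB j)
    _ = (1 : Matrix m m 𝕜) ⊗ₖ partialTraceFst (∑ j, A j ⊗ₖ B j) := by
      rw [map_sum]
      exact (map_sum (kroneckerBilinear (R := 𝕜) (1 : Matrix m m 𝕜)) _ _).symm

end

/-- a separable positive semidefinite matrix
`σ = Σ_j p_j α_j ⊗ β_j` satisfies `σ ≤ I ⊗ Tr₁(σ)` in the Loewner order. -/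
theorem separable_le_id_tensor_marginal
    (d d' : ℕ) (hd : 1 ≤ d) (hd' : 1 ≤ d')
    (J : Type) [Fintype J]
    (p : J → ℝ) (hp : ∀ j, 0 ≤ p j)
    (α : J → Matrix (Fin d) (Fin d) ℂ)
    (hα : ∀ j, (α j).PosSemidef) (hαtr : ∀ j, (α j).trace = 1)
    (β : J → Matrix (Fin d') (Fin d') ℂ)
    (hβ : ∀ j, (β j).PosSemidef) (hβtr : ∀ j, (β j).trace = 1)
    (σ : Matrix (Fin d × Fin d') (Fin d × Fin d') ℂ)
    (hσ : σ = ∑ j, ((p j : ℂ)) • ((α j) ⊗ₖ (β j))) :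
    (((1 : Matrix (Fin d) (Fin d) ℂ) ⊗ₖ ptraceA σ) - σ).PosSemidef := by
  simp only [← smul_kronecker] at hσ
  exact hσ ▸ separable_le_id_tensor_marginal_general
    (fun j => (hα j).smul (Complex.zero_le_real.mpr (hp j))) hβ

end
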